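/- arXiv:2312.00650 — 2 statements merged into one kernel-verified Lean document; each statement's English description precedes it below -/
import Mathlib

section
/- If G is a gamegraph with starting position s and ∼ is a congruence relation on G, then the quotient rulegraph G/∼ is a gamegraph whose starting position is the class [s]: [s] is the unique source of G/∼ and every class is a subposition of [s]. -/
/-- The set of options (out-neighbors) of a vertex `p` in the digraph with arrow
relation `E`. -/
def OptSet {V : Type*} (E : V → V → Prop) (p : V) : Set V := {q | E p q}

/-- A digraph has no infinite directed walk (i.e. it is a rulegraph). -/
def NoInfiniteWalk {V : Type*} (E : V → V → Prop) : Prop :=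
  ¬ ∃ f : ℕ → V, ∀ n, E (f n) (f (n + 1))

/-- A map `α` between digraphs is option preserving if `Opt (α p) = α '' Opt p`
for every vertex `p`. -/
def OptionPreserving {V W : Type*} (E : V → V → Prop) (F : W → W → Prop)
    (α : V → W) : Prop :=
  ∀ p, OptSet F (α p) = α '' OptSet E p

/-- A source is a vertex with no in-neighbors. -/
def IsSource {V : Type*} (E : V → V → Prop) (s : V) : Prop := ∀ q, ¬ E q s

/-- A gamegraph is a rulegraph with a unique source `s` (the starting position)
such that every vertex is a subposition of `s`. -/
def IsGamegraph {V : Type*} (E : V → V → Prop) (s : V) : Prop :=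
  NoInfiniteWalk E ∧ IsSource E s ∧ (∀ t, IsSource E t → t = s) ∧
    ∀ p, Relation.ReflTransGen E s p

/-- The equivalence class of `p` under the relation `r`. -/
def cls {V : Type*} (r : V → V → Prop) (p : V) : Set V := {x | r p x}

/-- A congruence relation on a rulegraph: an equivalence relation such that
related vertices have the same set of classes of options. -/
def IsCongruence {V : Type*} (E : V → V → Prop) (r : V → V → Prop) : Prop :=
  Equivalence r ∧ ∀ p q, r p q → cls r '' OptSet E p = cls r '' OptSet E q

/-- A rulegraph is simple if its only congruence relation is equality. -/
def IsSimple {V : Type*} (E : V → V → Prop) : Prop :=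
  ∀ r : V → V → Prop, IsCongruence E r → ∀ p q, r p q → p = q

/-- The arrow relation of the quotient digraph by a setoid `s`: there is an arrow
from `[p]` to `[q]` exactly when there are `p' ∼ p` and `q' ∼ q` with `q' ∈ Opt p'`. -/
def QuotE {V : Type*} (E : V → V → Prop) (s : Setoid V) :
    Quotient s → Quotient s → Prop :=
  fun a b => ∃ p q : V, Quotient.mk s p = a ∧ Quotient.mk s q = b ∧ E p q

theorem noInfiniteWalk_iff_wellFounded {V : Type*} {E : V → V → Prop} :
    NoInfiniteWalk E ↔ WellFounded (flip E) := by
  rw [wellFounded_iff_isEmpty_descending_chain, NoInfiniteWalk, isEmpty_subtype, not_exists]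
  rfl

/-- Arrows of the quotient lift along any choice of representative of their tail. -/
theorem IsCongruence.exists_lift {V : Type*} {E : V → V → Prop} {sd : Setoid V}
    (hcong : IsCongruence E sd.r) {p : V} {b : Quotient sd}
    (h : QuotE E sd (Quotient.mk sd p) b) : ∃ q, E p q ∧ Quotient.mk sd q = b := by
  obtain ⟨p', q', hp, rfl, hE⟩ := h
  have hmem : cls sd.r q' ∈ cls sd.r '' OptSet E p :=
    hcong.2 p' p (Quotient.exact hp) ▸ Set.mem_image_of_mem _ hE
  obtain ⟨q, hq, hcls⟩ := hmem
  have hqq' : q' ∈ cls sd.r q := hcls ▸ hcong.1.refl q'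
  exact ⟨q, hq, Quotient.sound hqq'⟩

theorem IsCongruence.noInfiniteWalk_quotE {V : Type*} {E : V → V → Prop} {sd : Setoid V}
    (hcong : IsCongruence E sd.r) (hE : NoInfiniteWalk E) : NoInfiniteWalk (QuotE E sd) := by
  rw [noInfiniteWalk_iff_wellFounded] at hE ⊢
  refine ⟨Quotient.ind fun p => ?_⟩
  induction p using hE.induction with
  | _ p ih =>
    refine ⟨_, fun b hb => ?_⟩
    obtain ⟨q, hq, rfl⟩ := hcong.exists_lift hb
    exact ih q hq

theorem NoInfiniteWalk.not_transGen_self {V : Type*} {E : V → V → Prop}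
    (hE : NoInfiniteWalk E) (p : V) : ¬ Relation.TransGen E p p := fun h =>
  (noInfiniteWalk_iff_wellFounded.1 hE).transGen.irrefl.irrefl p (Relation.transGen_swap.2 h)

theorem reflTransGen_quotE_mk {V : Type*} {E : V → V → Prop} (sd : Setoid V) {p q : V}
    (h : Relation.ReflTransGen E p q) :
    Relation.ReflTransGen (QuotE E sd) (Quotient.mk sd p) (Quotient.mk sd q) :=
  h.lift _ fun a b hab => ⟨a, b, rfl, rfl, hab⟩

/-- The quotient of a gamegraph by a congruence relation is a gamegraph whose
starting position is the class of the starting position. -/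
theorem stmt_11 {V : Type*} (E : V → V → Prop) (s : V)
    (hG : IsGamegraph E s) (sd : Setoid V) (hcong : IsCongruence E sd.r) :
    IsGamegraph (QuotE E sd) (Quotient.mk sd s) := by
  obtain ⟨hwalk, -, -, hreach⟩ := hG
  have hwalk' := hcong.noInfiniteWalk_quotE hwalk
  have hreach' : ∀ a, Relation.ReflTransGen (QuotE E sd) (Quotient.mk sd s) a :=
    Quotient.ind fun p => reflTransGen_quotE_mk sd (hreach p)
  refine ⟨hwalk', fun a ha => ?_, fun t ht => ?_, hreach'⟩
  · exact hwalk'.not_transGen_self _ (.tail' (hreach' a) ha)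
  · rcases (hreach' t).cases_tail with h | ⟨c, -, hc⟩
    · exact h
    · exact absurd hc (ht c)
end

section
/- (Fourth Isomorphism Theorem for rulegraphs) Let R be a rulegraph and D a congruence relation on R. Then the map sending a congruence relation C on R that contains D to the relation C/D on the quotient rulegraph R/D (defined by [p] (C/D) [q] ↔ p C q) is an order isomorphism between the lattice { C ∈ Con(R) | D ⊆ C } of congruence relations on R containing D and the lattice Con(R/D) of congruence relations on R/D, both ordered by inclusion. -/
theorem cls_eq_cls_iff {V : Type*} {r : V → V → Prop} (hr : Equivalence r) {a b : V} :
    cls r a = cls r b ↔ r a b := by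
  constructor
  · intro h
    have hb : b ∈ cls r a := h ▸ hr.refl b
    exact hb
  · intro h
    ext x
    exact ⟨fun hx => hr.trans (hr.symm h) hx, fun hx => hr.trans h hx⟩

/-- A congruence relation is an equivalence relation that is a simulation of the arrow
relation by itself. -/
theorem isCongruence_iff {V : Type*} {E r : V → V → Prop} :
    IsCongruence E r ↔
      Equivalence r ∧ ∀ p q p', r p q → E p p' → ∃ q', E q q' ∧ r p' q' := by
  refine and_congr_right fun hr => ⟨fun h p q p' hpq hp => ?_, fun h p q hpq => ?_⟩
  · obtain ⟨q', hq, hq'⟩ : cls r p' ∈ cls r '' OptSet E q :=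
      h p q hpq ▸ Set.mem_image_of_mem _ hp
    exact ⟨q', hq, hr.symm ((cls_eq_cls_iff hr).1 hq')⟩
  · have image_subset : ∀ a b, r a b → cls r '' OptSet E a ⊆ cls r '' OptSet E b := by
      rintro a b hab _ ⟨a', ha, rfl⟩
      obtain ⟨b', hb, hab'⟩ := h a b a' hab ha
      exact ⟨b', hb, ((cls_eq_cls_iff hr).2 hab').symm⟩
    exact (image_subset p q hpq).antisymm (image_subset q p (hr.symm hpq))

/-- The relation `C/D` induced on the quotient by `D`. -/
def quotRel {V : Type*} (D : Setoid V) (C : V → V → Prop) :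
    Quotient D → Quotient D → Prop :=
  fun a b => ∃ p q : V, Quotient.mk D p = a ∧ Quotient.mk D q = b ∧ C p q

theorem quotRel_mk_iff {V : Type*} {D : Setoid V} {C : V → V → Prop} (hC : Equivalence C)
    (hDC : ∀ p q, D.r p q → C p q) (p q : V) :
    quotRel D C (Quotient.mk D p) (Quotient.mk D q) ↔ C p q := by
  constructor
  · rintro ⟨p', q', hp, hq, h⟩
    exact hC.trans (hC.symm (hDC _ _ (Quotient.exact hp)))
      (hC.trans h (hDC _ _ (Quotient.exact hq)))
  · exact fun h => ⟨p, q, rfl, rfl, h⟩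

theorem IsCongruence.quotRel {V : Type*} {E : V → V → Prop} {D : Setoid V}
    {C : V → V → Prop} (hC : IsCongruence E C) (hDC : ∀ p q, D.r p q → C p q) :
    IsCongruence (QuotE E D) (quotRel D C) := by
  obtain ⟨hr, hsim⟩ := isCongruence_iff.1 hC
  have hmk := quotRel_mk_iff hr hDC
  refine isCongruence_iff.2 ⟨⟨?_, ?_, ?_⟩, ?_⟩
  · rintro ⟨p⟩
    exact (hmk p p).2 (hr.refl p)
  · rintro ⟨p⟩ ⟨q⟩ h
    exact (hmk q p).2 (hr.symm ((hmk p q).1 h))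
  · rintro ⟨p⟩ ⟨q⟩ ⟨s⟩ h h'
    exact (hmk p s).2 (hr.trans ((hmk p q).1 h) ((hmk q s).1 h'))
  · rintro _ ⟨q⟩ _ h ⟨p, p', rfl, rfl, hp⟩
    obtain ⟨q', hq, h'⟩ := hsim p q p' ((hmk p q).1 h) hp
    exact ⟨Quotient.mk D q', ⟨q, q', rfl, rfl, hq⟩, (hmk p' q').2 h'⟩

/-- A congruence relation on the quotient by a congruence relation `D` pulls back to a
congruence relation. -/
theorem IsCongruence.comap_mk {V : Type*} {E : V → V → Prop} {D : Setoid V}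
    (hD : IsCongruence E D.r) {C : Quotient D → Quotient D → Prop}
    (hC : IsCongruence (QuotE E D) C) :
    IsCongruence E fun p q => C (Quotient.mk D p) (Quotient.mk D q) := by
  obtain ⟨hr, hsim⟩ := isCongruence_iff.1 hC
  refine isCongruence_iff.2 ⟨hr.comap _, fun p q p' h hp => ?_⟩
  obtain ⟨_, ⟨q₀, q₁, hq₀, rfl, hq⟩, h'⟩ := hsim _ _ _ h ⟨p, p', rfl, rfl, hp⟩
  obtain ⟨q', hq', hD'⟩ := (isCongruence_iff.1 hD).2 q₀ q q₁ (Quotient.exact hq₀) hq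
  have heq : Quotient.mk D q₁ = Quotient.mk D q' := Quotient.sound hD'
  exact ⟨q', hq', heq ▸ h'⟩

/-- Fourth Isomorphism Theorem for rulegraphs: for a congruence relation `D` on
a rulegraph `R`, the map `C ↦ C/D` is an order isomorphism between the lattice
of congruence relations on `R` containing `D` and the lattice of congruence
relations on `R/D`. -/
theorem stmt_19 {V : Type*} (E : V → V → Prop) (hR : NoInfiniteWalk E)
    (D : Setoid V) (hD : IsCongruence E D.r) :
    ∃ φ : {C : V → V → Prop // IsCongruence E C ∧ ∀ p q, D.r p q → C p q} ≃o
          {C' : Quotient D → Quotient D → Prop // IsCongruence (QuotE E D) C'},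
      ∀ (C : {C : V → V → Prop // IsCongruence E C ∧ ∀ p q, D.r p q → C p q})
        (p q : V),
        (φ C).1 (Quotient.mk D p) (Quotient.mk D q) ↔ C.1 p q := by
  have hmk (C : {C : V → V → Prop // IsCongruence E C ∧ ∀ p q, D.r p q → C p q}) :=
    quotRel_mk_iff C.2.1.1 C.2.2
  refine ⟨{
    toFun := fun C => ⟨quotRel D C.1, C.2.1.quotRel C.2.2⟩
    invFun := fun C => ⟨fun p q => C.1 (Quotient.mk D p) (Quotient.mk D q),
      hD.comap_mk C.2, fun p q h => ?_⟩
    left_inv := fun C => Subtype.ext (funext₂ fun p q => propext (hmk C p q))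
    right_inv := fun C => Subtype.ext (funext₂ fun a b => propext ⟨?_, ?_⟩)
    map_rel_iff' := fun {C C'} => ⟨fun h p q hpq => ?_, ?_⟩ }, hmk⟩
  · have heq : Quotient.mk D p = Quotient.mk D q := Quotient.sound h
    beta_reduce
    exact heq ▸ C.2.1.refl _
  · rintro ⟨p, q, rfl, rfl, h⟩
    exact h
  · obtain ⟨p, rfl⟩ := Quotient.exists_rep a
    obtain ⟨q, rfl⟩ := Quotient.exists_rep b
    exact fun h => ⟨p, q, rfl, rfl, h⟩
  · exact (hmk C' p q).1 (h _ _ ((hmk C p q).2 hpq))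
  · rintro h _ _ ⟨p, q, hp, hq, hpq⟩
    exact ⟨p, q, hp, hq, h p q hpq⟩
end
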